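/- Let d ≥ 1 and C ≥ 1 be integers, let f_1, …, f_C : ℝ^d → (0, ∞) be measurable functions such that ∏_{c=1}^C f_c is Lebesgue-integrable, and for each c let p_c : ℝ^d × ℝ^d → [0, ∞) be a measurable kernel satisfying ∫_{ℝ^d} p_c(y | x) f_c(x)² dx = f_c(y)² for every y ∈ ℝ^d. Define g(x^{(1)}, …, x^{(C)}, y) := ∏_{c=1}^C [ f_c(x^{(c)})² · p_c(y | x^{(c)}) / f_c(y) ] on ℝ^{(C+1)d}. Then for every y ∈ ℝ^d, ∫_{ℝ^d} ⋯ ∫_{ℝ^d} g(x^{(1)}, …, x^{(C)}, y) dx^{(1)} ⋯ dx^{(C)} = ∏_{c=1}^C f_c(y); consequently the y-marginal of the (finite) measure with density g is proportional to the product density ∏_{c=1}^C f_c. -/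

import Mathlib

open MeasureTheory

section

variable {E 𝕜 : Type*} [MeasurableSpace E] [RCLike 𝕜] (μ : Measure E)

lemma integral_sq_mul_div_eq_self_of_stationary {f k : E → 𝕜} {y : E} (hfy : f y ≠ 0)
    (hk : ∫ x, k x * f x ^ 2 ∂μ = f y ^ 2) :
    ∫ x, f x ^ 2 * k x / f y ∂μ = f y :=
  calc ∫ x, f x ^ 2 * k x / f y ∂μ
      = (∫ x, k x * f x ^ 2 ∂μ) / f y := by simp only [integral_div, mul_comm]
    _ = f y := by rw [hk, sq, mul_div_cancel_right₀ _ hfy]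

theorem statement0_general {ι : Type*} [Fintype ι] [SigmaFinite μ]
    (f : ι → E → 𝕜) (p : ι → E → E → 𝕜) (y : E) (hfy : ∀ c, f c y ≠ 0)
    (hp_stat : ∀ c, ∫ x, p c y x * f c x ^ 2 ∂μ = f c y ^ 2) :
    ∫ x : ι → E, ∏ c, (f c (x c) ^ 2 * p c y (x c) / f c y) ∂Measure.pi (fun _ => μ) =
      ∏ c, f c y := by
  rw [integral_fintype_prod_eq_prod fun c x => f c x ^ 2 * p c y x / f c y]
  exact Finset.prod_congr rfl fun c _ =>
    integral_sq_mul_div_eq_self_of_stationary μ (hfy c) (hp_stat c)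

end

/-- Proposition `extended` of the paper: if each kernel `p c` has stationary
(unnormalised) density `(f c)^2`, then the `y`-marginal of the extended density `g` is the
product density `∏ c, f c y`. -/
theorem statement0 (d C : ℕ) (hd : 1 ≤ d) (hC : 1 ≤ C)
    (f : Fin C → (Fin d → ℝ) → ℝ)
    (hf_pos : ∀ c x, 0 < f c x)
    (hf_meas : ∀ c, Measurable (f c))
    (hf_int : Integrable (fun x : Fin d → ℝ => ∏ c, f c x) volume)
    (p : Fin C → (Fin d → ℝ) → (Fin d → ℝ) → ℝ)   -- `p c y x` is `p_c(y | x)`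
    (hp_nonneg : ∀ c y x, 0 ≤ p c y x)
    (hp_meas : ∀ c, Measurable (Function.uncurry (p c)))
    (hp_stat : ∀ c y, (∫ x : Fin d → ℝ, p c y x * (f c x) ^ 2) = (f c y) ^ 2) :
    ∀ y : Fin d → ℝ,
      (∫ x : Fin C → Fin d → ℝ, ∏ c, ((f c (x c)) ^ 2 * p c y (x c) / f c y)) =
        ∏ c, f c y :=
  fun y => statement0_general volume f p y (fun c => (hf_pos c y).ne') fun c => hp_stat c y
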